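/- No topological space definable in an o-minimal structure is homeomorphic to the Appert space, i.e. the topology on ℕ in which a set U is open if and only if 0 ∉ U or lim_{n→∞} |U ∩ {1, …, n}| / n = 1. -/

import Mathlib

open FirstOrder FirstOrder.Language Set Cardinal Filter Topology

universe u

/-- A subset of a linear order is a finite union of points and open intervals
with endpoints in `M ∪ {-∞, +∞}` (lower endpoints in `WithBot M = M ∪ {-∞}`,
upper endpoints in `WithTop M = M ∪ {+∞}`). -/
def IsFinUnionPointsIntervals {M : Type*} [LinearOrder M] (s : Set M) : Prop :=
  ∃ (P : Finset M) (I : Finset (WithBot M × WithTop M)),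
    s = ↑P ∪ ⋃ p ∈ I, {x : M | p.1 < (x : WithBot M) ∧ (x : WithTop M) < p.2}

/-- `M` is an o-minimal `L`-structure: the language defines the linear order of `M`,
which is dense and without endpoints, and every subset of `M` definable with parameters
is a finite union of points and open intervals with endpoints in `M ∪ {-∞, +∞}`. -/
structure IsOMinimal (L : FirstOrder.Language) (M : Type*) [L.Structure M] [LinearOrder M] :
    Prop where
  denselyOrdered : DenselyOrdered M
  noMinOrder : NoMinOrder M
  noMaxOrder : NoMaxOrder M
  definable_lt : (∅ : Set M).Definable L {x : Fin 2 → M | x 0 < x 1}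
  tame : ∀ s : Set M, (Set.univ : Set M).Definable₁ L s → IsFinUnionPointsIntervals s

/-- A topological space `(A, t)` is definable in the structure `M` when `A ⊆ M^n` is a
definable set and the topology `t` admits a definable basis, i.e. a basis of the form
`{ψ(A;b) : b ∈ S}` for some formula `ψ(x;y)` and definable set `S ⊆ M^|y|`. -/
def IsDefinableTopSpace (L : FirstOrder.Language) {M : Type*} [L.Structure M] {n : ℕ}
    (A : Set (Fin n → M)) (t : TopologicalSpace A) : Prop :=
  (Set.univ : Set M).Definable L A ∧
  ∃ (k : ℕ) (ψ : L.Formula (Fin n ⊕ Fin k)) (S : Set (Fin k → M)),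
    (Set.univ : Set M).Definable L S ∧
    @TopologicalSpace.IsTopologicalBasis A t
      ((fun b => {x : A | ψ.Realize (Sum.elim (x : Fin n → M) b)}) '' S)

/-- Openness in the Appert space: `U ⊆ ℕ` is open iff `0 ∉ U` or the density
`|U ∩ {1, …, n}| / n` tends to `1` as `n → ∞`. -/
def AppertIsOpen (U : Set ℕ) : Prop :=
  0 ∉ U ∨ Tendsto (fun m : ℕ => (Nat.card ↥(U ∩ Set.Icc 1 m) : ℝ) / m) atTop (𝓝 1)

section helpers

def DP (L : FirstOrder.Language.{u, u}) {M : Type u} [L.Structure M] {α : Type}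
    (P : (α → M) → Prop) : Prop := (Set.univ : Set M).Definable L {v | P v}

variable {L : FirstOrder.Language.{u, u}} {M : Type u} [L.Structure M] {α β : Type}

theorem DP.and {P Q : (α → M) → Prop} (hP : DP L P) (hQ : DP L Q) : DP L (fun v => P v ∧ Q v) :=
  Set.Definable.inter hP hQ

theorem DP.not {P : (α → M) → Prop} (hP : DP L P) : DP L (fun v => ¬ P v) :=
  Set.Definable.compl hP

theorem DP.congr {P Q : (α → M) → Prop} (hP : DP L P) (h : ∀ v, P v ↔ Q v) : DP L Q := by
  have : P = Q := funext fun v => propext (h v)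
  exact this ▸ hP

theorem DP.of {s : Set (α → M)} {Q : (α → M) → Prop} (hs : (Set.univ : Set M).Definable L s)
    (h : ∀ v, v ∈ s ↔ Q v) : DP L Q := by
  have : s = {v | Q v} := Set.ext h
  unfold DP
  rwa [← this]

theorem DP.imp {P Q : (α → M) → Prop} (hP : DP L P) (hQ : DP L Q) : DP L (fun v => P v → Q v) :=
  (hP.and hQ.not).not.congr fun v => by tauto

theorem DP.comp {P : (α → M) → Prop} (hP : DP L P) (f : α → β) :
    DP L (fun v : β → M => P (v ∘ f)) :=
  Set.Definable.preimage_comp f hP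

theorem DP.exN {n : ℕ} {P : (α → M) → (Fin n → M) → Prop}
    (hP : DP L (fun w : α ⊕ Fin n → M => P (w ∘ Sum.inl) (w ∘ Sum.inr))) :
    DP L (fun v => ∃ x, P v x) := by
  have := Set.Definable.image_comp_sumInl_fin n hP
  refine DP.of this fun v => ?_
  constructor
  · rintro ⟨w, hw, rfl⟩
    exact ⟨_, hw⟩
  · rintro ⟨x, hx⟩
    exact ⟨Sum.elim v x, hx, rfl⟩

theorem DP.ex {P : (α → M) → M → Prop}
    (hP : DP L (fun w : α ⊕ Fin 1 → M => P (w ∘ Sum.inl) (w (Sum.inr 0)))) :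
    DP L (fun v => ∃ x, P v x) := by
  refine (DP.exN (n := 1) (P := fun v x => P v (x 0)) hP).congr fun v => ?_
  exact ⟨fun ⟨x, hx⟩ => ⟨_, hx⟩, fun ⟨x, hx⟩ => ⟨fun _ => x, hx⟩⟩

theorem DP.all {P : (α → M) → M → Prop}
    (hP : DP L (fun w : α ⊕ Fin 1 → M => P (w ∘ Sum.inl) (w (Sum.inr 0)))) :
    DP L (fun v => ∀ x, P v x) :=
  (DP.ex (P := fun v x => ¬ P v x) hP.not).not.congr fun v => by push Not; rfl

theorem DP.eqc {n : ℕ} (x : Fin n → M) (f : Fin n → α) :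
    DP L (fun v : α → M => v ∘ f = x) := by
  have := Set.definable_iInter_of_finite (f := fun i : Fin n => {v : α → M | v (f i) = x i})
    (L := L) (A := Set.univ) (fun i => by
      refine ⟨(FirstOrder.Language.Term.var (f i)).equal (Constants.term (L.con (⟨x i, trivial⟩ : (Set.univ : Set M)))), ?_⟩
      ext v
      simp)
  refine DP.of this fun v => ?_
  simp [funext_iff]

theorem DP.fix {n : ℕ} {P : (α → M) → (Fin n → M) → Prop}
    (hP : DP L (fun w : α ⊕ Fin n → M => P (w ∘ Sum.inl) (w ∘ Sum.inr))) (x : Fin n → M) :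
    DP L (fun v => P v x) := by
  refine (DP.exN (P := fun v y => y = x ∧ P v y) ((DP.eqc x _).and hP)).congr fun v => ?_
  simp

theorem DP.lt [LinearOrder M] (hM : IsOMinimal L M) (i j : α) : DP L (fun v : α → M => v i < v j) :=
  DP.comp (P := fun v : Fin 2 → M => v 0 < v 1)
    (hM.definable_lt.mono (Set.empty_subset _)) ![i, j]

end helpers

section order

variable {M : Type u} [LinearOrder M]

def Bd (s : M → Prop) (c : M) : Prop :=
  ∀ a d, a < c → c < d → ∃ y z, a < y ∧ y < d ∧ a < z ∧ z < d ∧ s y ∧ ¬ s z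

theorem exists_finset_const {s : Set M} (hs : IsFinUnionPointsIntervals s) :
    ∃ Q : Finset M, ∀ x y, x ≤ y → (∀ q ∈ Q, x ≤ q → y < q) → (x ∈ s ↔ y ∈ s) := by
  classical
  obtain ⟨P, I, rfl⟩ := hs
  have key : ∀ p : WithBot M × WithTop M, ∃ Q : Finset M, ∀ x y, x ≤ y →
      (∀ q ∈ Q, x ≤ q → y < q) →
      ((p.1 < (x : WithBot M) ∧ (x : WithTop M) < p.2) ↔
        (p.1 < (y : WithBot M) ∧ (y : WithTop M) < p.2)) := by
    rintro ⟨a, b⟩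
    have hb : ∃ Q : Finset M, ∀ x y, x ≤ y → (∀ q ∈ Q, x ≤ q → y < q) →
        ((x : WithTop M) < b ↔ (y : WithTop M) < b) := by
      induction b with
      | top => exact ⟨∅, fun x y _ _ => by simp [WithTop.coe_lt_top]⟩
      | coe b =>
        refine ⟨{b}, fun x y hxy h => ?_⟩
        simp only [WithTop.coe_lt_coe]
        exact ⟨fun h1 => h b (by simp) h1.le, fun h1 => hxy.trans_lt h1⟩
    have ha : ∃ Q : Finset M, ∀ x y, x ≤ y → (∀ q ∈ Q, x ≤ q → y < q) →
        (a < (x : WithBot M) ↔ a < (y : WithBot M)) := by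
      induction a with
      | bot => exact ⟨∅, fun x y _ _ => by simp [WithBot.bot_lt_coe]⟩
      | coe a =>
        refine ⟨{a}, fun x y hxy h => ?_⟩
        simp only [WithBot.coe_lt_coe]
        refine ⟨fun h1 => h1.trans_le hxy, fun h1 => ?_⟩
        by_contra h2
        exact absurd (h a (by simp) (not_lt.1 h2)) (not_lt.2 h1.le)
    obtain ⟨Q1, h1⟩ := ha
    obtain ⟨Q2, h2⟩ := hb
    refine ⟨Q1 ∪ Q2, fun x y hxy h => ?_⟩
    rw [h1 x y hxy fun q hq => h q (Finset.mem_union_left _ hq),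
      h2 x y hxy fun q hq => h q (Finset.mem_union_right _ hq)]
  choose Q hQ using key
  refine ⟨P ∪ I.biUnion Q, fun x y hxy h => ?_⟩
  simp only [Set.mem_union, Set.mem_iUnion, Finset.mem_coe]
  refine or_congr ⟨fun hx => ?_, fun hy => ?_⟩ ?_
  · exact absurd (h x (Finset.mem_union_left _ hx) le_rfl) (not_lt.2 hxy)
  · exact absurd (h y (Finset.mem_union_left _ hy) hxy) (lt_irrefl _)
  · refine exists_congr fun p => exists_congr fun hp => ?_
    exact hQ p x y hxy fun q hq =>
      h q (Finset.mem_union_right _ (Finset.mem_biUnion.2 ⟨p, hp, hq⟩))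

theorem bd_finite [DenselyOrdered M] [NoMinOrder M] [NoMaxOrder M] {s : M → Prop}
    (hs : IsFinUnionPointsIntervals {x | s x}) : {c | Bd s c}.Finite := by
  classical
  obtain ⟨Q, hQ⟩ := exists_finset_const hs
  refine Q.finite_toSet.subset fun c hc => ?_
  by_contra hcQ
  rw [Finset.mem_coe] at hcQ
  have ha : ∃ a < c, ∀ q ∈ Q, a < q → c ≤ q := by
    obtain ⟨m, hm⟩ := exists_lt c
    by_cases hne : (Q.filter (· < c)).Nonempty
    · obtain ⟨a, haf, hamax⟩ := (Q.filter (· < c)).exists_max_image id hne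
      refine ⟨a, (Finset.mem_filter.1 haf).2, fun q hq h => ?_⟩
      by_contra h3
      exact absurd (hamax q (Finset.mem_filter.2 ⟨hq, not_le.1 h3⟩)) (not_le.2 h)
    · refine ⟨m, hm, fun q hq h => ?_⟩
      by_contra h3
      exact hne ⟨q, Finset.mem_filter.2 ⟨hq, not_le.1 h3⟩⟩
  have hd : ∃ d, c < d ∧ ∀ q ∈ Q, q < d → q ≤ c := by
    obtain ⟨m, hm⟩ := exists_gt c
    by_cases hne : (Q.filter (c < ·)).Nonempty
    · obtain ⟨a, haf, hamin⟩ := (Q.filter (c < ·)).exists_min_image id hne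
      refine ⟨a, (Finset.mem_filter.1 haf).2, fun q hq h => ?_⟩
      by_contra h3
      exact absurd (hamin q (Finset.mem_filter.2 ⟨hq, not_le.1 h3⟩)) (not_le.2 h)
    · refine ⟨m, hm, fun q hq h => ?_⟩
      by_contra h3
      exact hne ⟨q, Finset.mem_filter.2 ⟨hq, not_le.1 h3⟩⟩
  obtain ⟨a, hac, ha⟩ := ha
  obtain ⟨d, hcd, hd⟩ := hd
  obtain ⟨y, z, hay, hyd, haz, hzd, hy, hz⟩ := hc a d hac hcd
  have key : ∀ q ∈ Q, a < q → ¬ q < d := by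
    intro q hq h1 h2
    exact hcQ (le_antisymm (ha q hq h1) (hd q hq h2) ▸ hq)
  rcases le_total y z with h | h
  · exact hz ((hQ y z h fun q hq h1 =>
      hzd.trans_le (not_lt.1 (key q hq (hay.trans_le h1)))).1 hy)
  · exact hz ((hQ z y h fun q hq h1 =>
      hyd.trans_le (not_lt.1 (key q hq (haz.trans_le h1)))).2 hy)

theorem bd_const [DenselyOrdered M] [NoMinOrder M] [NoMaxOrder M] {s : M → Prop}
    (hs : IsFinUnionPointsIntervals {x | s x}) {x y : M} (hxy : x ≤ y)
    (h : ∀ c, x ≤ c → c ≤ y → ¬ Bd s c) : s x ↔ s y := by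
  classical
  obtain ⟨Q, hQ⟩ := exists_finset_const hs
  have main : ∀ m : ℕ, ∀ x, x ≤ y → (∀ c, x ≤ c → c ≤ y → ¬ Bd s c) →
      (Q.filter (fun q => x ≤ q ∧ q ≤ y)).card ≤ m → (s x ↔ s y) := by
    intro m
    induction m with
    | zero =>
      intro x hxy h hm
      refine hQ x y hxy fun q hq h1 => ?_
      by_contra h2
      have : q ∈ (Q.filter (fun q => x ≤ q ∧ q ≤ y)) :=
        Finset.mem_filter.2 ⟨hq, h1, not_lt.1 h2⟩
      rw [Finset.card_eq_zero.1 (Nat.le_zero.1 hm)] at this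
      simp at this
    | succ m ih =>
      intro x hxy h hm
      by_cases hne : (Q.filter (fun q => x ≤ q ∧ q ≤ y)).Nonempty
      · set q := (Q.filter (fun q => x ≤ q ∧ q ≤ y)).min' hne with hq
        have hqm := (Q.filter (fun q => x ≤ q ∧ q ≤ y)).min'_mem hne
        rw [← hq] at hqm
        obtain ⟨hqQ, hxq, hqy⟩ := Finset.mem_filter.1 hqm
        have hmin : ∀ r ∈ Q, x ≤ r → r ≤ y → q ≤ r := fun r hr h1 h2 =>
          Finset.min'_le _ r (Finset.mem_filter.2 ⟨hr, h1, h2⟩)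
        have hb := h q hxq hqy
        unfold Bd at hb
        push Not at hb
        obtain ⟨a, d, haq, hqd, hb⟩ := hb
        have hloc : ∀ u v, a < u → u < d → a < v → v < d → (s u ↔ s v) := fun u v h1 h2 h3 h4 =>
          ⟨fun hu => hb u v h1 h2 h3 h4 hu, fun hv => hb v u h3 h4 h1 h2 hv⟩
        have h1 : s x ↔ s q := by
          rcases hxq.eq_or_lt with e | hlt
          · rw [← e]
          · obtain ⟨x', hx1, hx2⟩ := exists_between (max_lt haq hlt)
            have hxx' : x < x' := (le_max_right _ _).trans_lt hx1
            have hax' : a < x' := (le_max_left _ _).trans_lt hx1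
            rw [← hloc x' q hax' (hx2.trans hqd) haq hqd]
            refine hQ x x' hxx'.le fun r hr hxr => ?_
            by_contra h5
            exact absurd (hmin r hr hxr ((not_lt.1 h5).trans (hx2.le.trans hqy)))
              (not_le.2 ((not_lt.1 h5).trans_lt hx2))
        rw [h1]
        rcases hqy.eq_or_lt with e | hlt
        · rw [← e]
        · obtain ⟨y', hy1, hy2⟩ := exists_between (lt_min hqd hlt)
          have hy'y : y' < y := hy2.trans_le (min_le_right _ _)
          have hy'd : y' < d := hy2.trans_le (min_le_left _ _)
          rw [hloc q y' haq hqd (haq.trans hy1) hy'd]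
          refine ih y' hy'y.le (fun c h1 h2 => h c (hxq.trans (hy1.le.trans h1)) h2) ?_
          have : (Q.filter (fun q => y' ≤ q ∧ q ≤ y)) ⊂ (Q.filter (fun q => x ≤ q ∧ q ≤ y)) := by
            refine Finset.ssubset_iff_subset_ne.2 ⟨fun r hr => ?_, fun e => ?_⟩
            · obtain ⟨h1, h2, h3⟩ := Finset.mem_filter.1 hr
              exact Finset.mem_filter.2 ⟨h1, hxq.trans (hy1.le.trans h2), h3⟩
            · rw [← e] at hqm
              exact absurd (Finset.mem_filter.1 hqm).2.1 (not_le.2 hy1)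
          have := Finset.card_lt_card this
          omega
      · refine ih x hxy h ?_
        rw [Finset.not_nonempty_iff_eq_empty.1 hne]
        simp
  exact main _ x hxy h le_rfl

end order

section main

variable {L : FirstOrder.Language.{u, u}} {M : Type u} [L.Structure M] [LinearOrder M]

def DX (L : FirstOrder.Language.{u, u}) {M : Type u} [L.Structure M] {k : ℕ}
    (X : (Fin k → M) → M → Prop) : Prop :=
  ∀ (α : Type) (g : Fin k → α) (h : α), DP L (fun v : α → M => X (v ∘ g) (v h))

def DR (L : FirstOrder.Language.{u, u}) {M : Type u} [L.Structure M] {n k : ℕ}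
    (R : (Fin n → M) → (Fin k → M) → M → Prop) : Prop :=
  ∀ (α : Type) (f : Fin n → α) (g : Fin k → α) (h : α),
    DP L (fun v : α → M => R (v ∘ f) (v ∘ g) (v h))

theorem DX.bd (hM : IsOMinimal L M) {k : ℕ} {X : (Fin k → M) → M → Prop} (hX : DX L X) :
    DX L (fun b c => Bd (X b) c) := by
  intro α g h
  unfold Bd
  refine DP.all (DP.all (DP.imp ?_ (DP.imp ?_ (DP.ex (DP.ex
    (DP.and ?_ (DP.and ?_ (DP.and ?_ (DP.and ?_ (DP.and ?_ (DP.not ?_)))))))))))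
  · exact DP.lt hM (Sum.inl (Sum.inr 0)) (Sum.inl (Sum.inl h))
  · exact DP.lt hM (Sum.inl (Sum.inl h)) (Sum.inr 0)
  · exact DP.lt hM (Sum.inl (Sum.inl (Sum.inl (Sum.inr 0)))) (Sum.inl (Sum.inr 0))
  · exact DP.lt hM (Sum.inl (Sum.inr 0)) (Sum.inl (Sum.inl (Sum.inr 0)))
  · exact DP.lt hM (Sum.inl (Sum.inl (Sum.inl (Sum.inr 0)))) (Sum.inr 0)
  · exact DP.lt hM (Sum.inr 0) (Sum.inl (Sum.inl (Sum.inr 0)))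
  · exact hX _ (fun i => Sum.inl (Sum.inl (Sum.inl (Sum.inl (g i))))) (Sum.inl (Sum.inr 0))
  · exact hX _ (fun i => Sum.inl (Sum.inl (Sum.inl (Sum.inl (g i))))) (Sum.inr 0)

theorem DR.bd (hM : IsOMinimal L M) {n k : ℕ} {R : (Fin n → M) → (Fin k → M) → M → Prop}
    (hR : DR L R) : DR L (fun x b c => Bd (R x b) c) := by
  intro α f g h
  unfold Bd
  refine DP.all (DP.all (DP.imp ?_ (DP.imp ?_ (DP.ex (DP.ex
    (DP.and ?_ (DP.and ?_ (DP.and ?_ (DP.and ?_ (DP.and ?_ (DP.not ?_)))))))))))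
  · exact DP.lt hM (Sum.inl (Sum.inr 0)) (Sum.inl (Sum.inl h))
  · exact DP.lt hM (Sum.inl (Sum.inl h)) (Sum.inr 0)
  · exact DP.lt hM (Sum.inl (Sum.inl (Sum.inl (Sum.inr 0)))) (Sum.inl (Sum.inr 0))
  · exact DP.lt hM (Sum.inl (Sum.inr 0)) (Sum.inl (Sum.inl (Sum.inr 0)))
  · exact DP.lt hM (Sum.inl (Sum.inl (Sum.inl (Sum.inr 0)))) (Sum.inr 0)
  · exact DP.lt hM (Sum.inr 0) (Sum.inl (Sum.inl (Sum.inr 0)))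
  · exact hR _ (fun i => Sum.inl (Sum.inl (Sum.inl (Sum.inl (f i)))))
      (fun i => Sum.inl (Sum.inl (Sum.inl (Sum.inl (g i))))) (Sum.inl (Sum.inr 0))
  · exact hR _ (fun i => Sum.inl (Sum.inl (Sum.inl (Sum.inl (f i)))))
      (fun i => Sum.inl (Sum.inl (Sum.inl (Sum.inl (g i))))) (Sum.inr 0)

theorem DX.tame (hM : IsOMinimal L M) {k : ℕ} {X : (Fin k → M) → M → Prop} (hX : DX L X)
    (b : Fin k → M) : IsFinUnionPointsIntervals {c | X b c} := by
  refine hM.tame _ ?_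
  exact DP.fix (α := Fin 1) (P := fun v b => X b (v 0)) (hX _ (fun i => Sum.inr i) (Sum.inl 0)) b

theorem DR.fixl {n k : ℕ} {R : (Fin n → M) → (Fin k → M) → M → Prop}
    (hR : DR L R) (x : Fin n → M) : DX L (R x) := by
  intro α g h
  exact DP.fix (P := fun v x => R x (v ∘ g) (v h))
    (hR _ (fun i => Sum.inr i) (fun i => Sum.inl (g i)) (Sum.inl h)) x

def nextX {k : ℕ} (X : (Fin k → M) → M → Prop) : (Fin k → M) → M → Prop :=
  fun b c => X b c ∧ ∃ c', c' < c ∧ X b c'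

theorem DX.next (hM : IsOMinimal L M) {k : ℕ} {X : (Fin k → M) → M → Prop} (hX : DX L X) :
    DX L (nextX X) := by
  intro α g h
  refine DP.and (hX _ g h) (DP.ex (DP.and ?_ ?_))
  · exact DP.lt hM (Sum.inr 0) (Sum.inl h)
  · exact hX _ (fun i => Sum.inl (g i)) (Sum.inr 0)

theorem exists_graphs (hM : IsOMinimal L M) {k : ℕ} {X : (Fin k → M) → M → Prop} (hX : DX L X)
    (hfin : ∀ b, {c | X b c}.Finite) :
    ∃ G : ℕ → (Fin k → M) → M → Prop, (∀ j, DX L (G j)) ∧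
      (∀ j b c c', G j b c → G j b c' → c = c') ∧ ∀ b c, X b c → ∃ j, G j b c := by
  have hI : ∀ j, DX L (nextX^[j] X) := by
    intro j
    induction j with
    | zero => exact hX
    | succ j ih =>
      rw [Function.iterate_succ_apply']
      exact ih.next hM
  refine ⟨fun j b c => (nextX^[j] X) b c ∧ ∀ c', c' < c → ¬ (nextX^[j] X) b c', ?_, ?_, ?_⟩
  · intro j α g h
    refine DP.and (hI j _ g h) (DP.all (DP.imp ?_ (DP.not ?_)))
    · exact DP.lt hM (Sum.inr 0) (Sum.inl h)
    · exact hI j _ (fun i => Sum.inl (g i)) (Sum.inr 0)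
  · rintro j b c c' ⟨h1, h2⟩ ⟨h3, h4⟩
    exact le_antisymm (not_lt.1 fun h => h2 _ h h3) (not_lt.1 fun h => h4 _ h h1)
  · intro b c hc
    have main : ∀ m : ℕ, ∀ X : (Fin k → M) → M → Prop, {c | X b c}.Finite → X b c →
        {c' | X b c' ∧ c' < c}.ncard ≤ m →
        ∃ j, (nextX^[j] X) b c ∧ ∀ c', c' < c → ¬ (nextX^[j] X) b c' := by
      intro m
      induction m with
      | zero =>
        intro X hf hc hm
        refine ⟨0, hc, fun c' h1 h2 => ?_⟩
        have h3 := (Set.ncard_eq_zero (hf.subset fun c' h => h.1)).1 (Nat.le_zero.1 hm)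
        have : c' ∈ {c' | X b c' ∧ c' < c} := ⟨h2, h1⟩
        rw [h3] at this
        exact this
      | succ m ih =>
        intro X hf hc hm
        by_cases hmin : ∀ c', c' < c → ¬ X b c'
        · exact ⟨0, hc, hmin⟩
        push Not at hmin
        obtain ⟨c0, h0, hX0⟩ := hmin
        have hf' : {c' | X b c' ∧ c' < c}.Finite := hf.subset fun c' h => h.1
        have hlt : {c' | nextX X b c' ∧ c' < c}.ncard < {c' | X b c' ∧ c' < c}.ncard := by
          refine Set.ncard_lt_ncard ?_ hf'
          refine ⟨fun c' h => ⟨h.1.1, h.2⟩, fun hsub => ?_⟩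
          obtain ⟨e, he, hemin⟩ := hf'.exists_minimalFor id _ ⟨c0, hX0, h0⟩
          obtain ⟨⟨_, e', he', hXe'⟩, _⟩ := hsub he
          have := hemin (j := e') ⟨hXe', he'.trans he.2⟩ he'.le
          exact absurd he' (not_lt.2 this)
        obtain ⟨j, hj⟩ := ih (nextX X) (hf.subset fun c' h => h.1) ⟨hc, c0, h0, hX0⟩ (by omega)
        exact ⟨j + 1, hj⟩
    exact main _ X (hfin b) hc le_rfl

theorem fam_countable (hM : IsOMinimal L M) {n : ℕ} {D : (Fin n → M) → Prop} (hD : DP L D)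
    (hDc : {x | D x}.Countable) : ∀ (k : ℕ) (R : (Fin n → M) → (Fin k → M) → Prop),
    DP L (fun w : Fin n ⊕ Fin k → M => R (w ∘ Sum.inl) (w ∘ Sum.inr)) →
    (Set.range fun b : Fin k → M => {x | D x ∧ R x b}).Countable := by
  haveI := hM.denselyOrdered
  haveI := hM.noMinOrder
  haveI := hM.noMaxOrder
  intro k
  induction k with
  | zero => intro R _; exact Set.countable_range _
  | succ k ih =>
    intro R₀ hR₀
    obtain ⟨R, hRdef⟩ : ∃ R : (Fin n → M) → (Fin k → M) → M → Prop,
      R = fun x b c => R₀ x (Fin.snoc (α := fun _ => M) b c) := ⟨_, rfl⟩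
    have hR : DR L R := by
      intro α f g h
      refine (hR₀.comp (Sum.elim f (Fin.snoc (α := fun _ => α) g h))).congr fun v => ?_
      rw [hRdef]
      have : (v ∘ Sum.elim f (Fin.snoc (α := fun _ => α) g h)) ∘ Sum.inr
          = Fin.snoc (α := fun _ => M) (v ∘ g) (v h) := Fin.comp_snoc v g h
      rw [this]
      rfl
    have hB : DR L (fun x b c => Bd (R x b) c) := hR.bd hM
    have hE : DX L (fun b c => ∃ x, D x ∧ Bd (R x b) c) := by
      intro α g h
      refine DP.exN (DP.and ?_ ?_)
      · exact hD.comp Sum.inr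
      · exact hB _ (fun i => Sum.inr i) (fun i => Sum.inl (g i)) (Sum.inl h)
    have hBt : ∀ x b, IsFinUnionPointsIntervals {c | R x b c} := fun x b => (hR.fixl x).tame hM b
    have hEt := fun b => hE.tame hM b
    choose G hGd hGf hGc using fun x => exists_graphs hM (hB.fixl x) fun b => bd_finite (hBt x b)
    obtain ⟨H, hHd, hHf, hHc⟩ := exists_graphs hM (hE.bd hM) fun b => bd_finite (hEt b)
    have c1 : ∀ X : (Fin k → M) → M → Prop, DX L X →
        (Set.range fun b : Fin k → M => {y | D y ∧ ∃ c, X b c ∧ R y b c}).Countable := by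
      intro X hX
      refine ih _ (DP.ex (DP.and ?_ ?_))
      · exact hX _ (fun i => Sum.inl (Sum.inr i)) (Sum.inr 0)
      · exact hR _ (fun i => Sum.inl (Sum.inl i)) (fun i => Sum.inl (Sum.inr i)) (Sum.inr 0)
    have c2 : ∀ X : (Fin k → M) → M → Prop, DX L X →
        (Set.range fun b : Fin k → M => {y | D y ∧ ∃ e, X b e ∧ ∃ d, e < d ∧
          ∀ c, e < c → c < d → R y b c}).Countable := by
      intro X hX
      refine ih _ (DP.ex (DP.and ?_ (DP.ex (DP.and ?_ (DP.all (DP.imp ?_ (DP.imp ?_ ?_)))))))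
      · exact hX _ (fun i => Sum.inl (Sum.inr i)) (Sum.inr 0)
      · exact DP.lt hM (Sum.inl (Sum.inr 0)) (Sum.inr 0)
      · exact DP.lt hM (Sum.inl (Sum.inl (Sum.inr 0))) (Sum.inr 0)
      · exact DP.lt hM (Sum.inr 0) (Sum.inl (Sum.inr 0))
      · exact hR _ (fun i => Sum.inl (Sum.inl (Sum.inl (Sum.inl i)))) (fun i => Sum.inl (Sum.inl (Sum.inl (Sum.inr i))))
          (Sum.inr 0)
    have c3 : (Set.range fun b : Fin k → M => {y | D y ∧ ∃ d, 
          ∀ c, c < d → R y b c}).Countable := by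
      refine ih _ (DP.ex (DP.all (DP.imp ?_ ?_)))
      · exact DP.lt hM (Sum.inr 0) (Sum.inl (Sum.inr 0))
      · exact hR _ (fun i => Sum.inl (Sum.inl (Sum.inl i))) (fun i => Sum.inl (Sum.inl (Sum.inr i))) (Sum.inr 0)
    have hcount := (((hDc.biUnion fun x _ => Set.countable_iUnion fun j => c1 _ (hGd x j)).union
      (Set.countable_iUnion fun j => c1 _ (hHd j))).union
      (Set.countable_iUnion fun j => c2 _ (hHd j))).union c3
    refine hcount.mono ?_
    rintro _ ⟨b₀, rfl⟩
    obtain ⟨b, c, rfl⟩ : ∃ b c, b₀ = Fin.snoc (α := fun _ => M) b c :=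
      ⟨Fin.init b₀, b₀ (Fin.last k), (Fin.snoc_init_self b₀).symm⟩
    have hR' : ∀ x, R₀ x (Fin.snoc (α := fun _ => M) b c) = R x b c := fun x => by rw [hRdef]
    simp only [hR']
    have hgraph : ∀ X : (Fin k → M) → M → Prop, (∀ b c c', X b c → X b c' → c = c') → X b c →
        {y | D y ∧ ∃ c, X b c ∧ R y b c} = {x | D x ∧ R x b c} := by
      intro X hf hX
      ext y
      refine and_congr_right fun _ => ⟨?_, fun h => ⟨c, hX, h⟩⟩
      rintro ⟨c', h1, h2⟩
      rwa [hf b c c' hX h1]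
    by_cases h1 : ∃ x, D x ∧ Bd (R x b) c
    · obtain ⟨x, hx, hxc⟩ := h1
      obtain ⟨j, hj⟩ := hGc x b c hxc
      left; left; left
      simp only [Set.mem_iUnion]
      exact ⟨x, hx, j, b, hgraph _ (hGf x j) hj⟩
    by_cases h2 : Bd (fun c => ∃ x, D x ∧ Bd (R x b) c) c
    · obtain ⟨j, hj⟩ := hHc b c h2
      left; left; right
      simp only [Set.mem_iUnion]
      exact ⟨j, b, hgraph _ (hHf j) hj⟩
    have hconst : ∀ c', c' ≤ c →
        (∀ e, c' ≤ e → e ≤ c → ¬ Bd (fun c => ∃ x, D x ∧ Bd (R x b) c) e) →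
        ∀ y, D y → (R y b c' ↔ R y b c) := by
      intro c' hc' he y hy
      refine bd_const (hBt y b) hc' fun e h3 h4 h5 => ?_
      exact h1 ((bd_const (hEt b) h4 fun e' h6 h7 => he e' (h3.trans h6) h7).1 ⟨y, hy, h5⟩)
    by_cases h3 : ∃ e, e < c ∧ Bd (fun c => ∃ x, D x ∧ Bd (R x b) c) e
    · obtain ⟨e0, he0, hbe0⟩ := h3
      have hf := (bd_finite (hEt b)).subset
        (t := {e | e < c ∧ Bd (fun c => ∃ x, D x ∧ Bd (R x b) c) e}) fun e h => h.2
      obtain ⟨e, ⟨hec, hbe⟩, hemax⟩ := hf.exists_maximalFor id _ ⟨e0, he0, hbe0⟩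
      have hno : ∀ e', e < e' → e' ≤ c → ¬ Bd (fun c => ∃ x, D x ∧ Bd (R x b) c) e' := by
        intro e' h4 h5 h6
        rcases h5.eq_or_lt with rfl | h7
        · exact h2 h6
        · exact absurd h4 (not_lt.2 (hemax (j := e') ⟨h7, h6⟩ h4.le))
      obtain ⟨j, hj⟩ := hHc b e hbe
      left; right
      simp only [Set.mem_iUnion]
      refine ⟨j, b, ?_⟩
      ext y
      refine and_congr_right fun hy => ⟨?_, fun h => ⟨e, hj, c, hec, fun c' h4 h5 => ?_⟩⟩
      · rintro ⟨e', he', d, hd, h⟩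
        rw [← hHf j b e e' hj he'] at hd h
        obtain ⟨c', h4, h5⟩ := exists_between (lt_min hd hec)
        have h6 : c' < c := h5.trans_le (min_le_right _ _)
        exact (hconst c' h6.le (fun e' h7 h8 => hno e' (h4.trans_le h7) h8) y hy).1
          (h c' h4 (h5.trans_le (min_le_left _ _)))
      · exact (hconst c' h5.le (fun e' h7 h8 => hno e' (h4.trans_le h7) h8) y hy).2 h
    · have hno : ∀ e', e' ≤ c → ¬ Bd (fun c => ∃ x, D x ∧ Bd (R x b) c) e' := by
        intro e' h5 h6
        rcases h5.eq_or_lt with rfl | h7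
        · exact h2 h6
        · exact h3 ⟨e', h7, h6⟩
      right
      refine ⟨b, ?_⟩
      ext y
      refine and_congr_right fun hy => ⟨?_, fun h => ⟨c, fun c' h5 => ?_⟩⟩
      · rintro ⟨d, h⟩
        obtain ⟨c', h5⟩ := exists_lt (min d c)
        have h6 : c' < c := h5.trans_le (min_le_right _ _)
        exact (hconst c' h6.le (fun e' h7 h8 => hno e' h8) y hy).1
          (h c' (h5.trans_le (min_le_left _ _)))
      · exact (hconst c' h5.le (fun e' h7 h8 => hno e' h8) y hy).2 h

end main


theorem appert_diag (U : ℕ → Set ℕ) (hU : ∀ i, 0 ∈ U i ∧ AppertIsOpen (U i)) :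
    ∃ V : Set ℕ, 0 ∈ V ∧ AppertIsOpen V ∧ ∀ i, ¬ U i ⊆ V := by
  have hx : ∀ i, ∃ x ∈ U i, (i + 1) ^ 2 ≤ x := by
    intro i
    by_contra hcon
    push Not at hcon
    have ht := (hU i).2.resolve_left (not_not.2 (hU i).1)
    have h0 : Tendsto (fun m : ℕ => (Nat.card ↥(U i ∩ Set.Icc 1 m) : ℝ) / m) atTop (𝓝 0) := by
      refine squeeze_zero (fun m => by positivity) (fun m => ?_)
        (tendsto_const_div_atTop_nhds_zero_nat (((i+1)^2 : ℕ) : ℝ))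
      have : Nat.card ↥(U i ∩ Set.Icc 1 m) ≤ (i+1)^2 := by
        rw [Nat.card_coe_set_eq]
        calc (U i ∩ Set.Icc 1 m).ncard ≤ (↑(Finset.range ((i+1)^2)) : Set ℕ).ncard := by
              refine Set.ncard_le_ncard (fun x hx => ?_) (Finset.finite_toSet _)
              simpa using hcon x hx.1
          _ = _ := by rw [Set.ncard_coe_finset, Finset.card_range]
      gcongr
    exact zero_ne_one (tendsto_nhds_unique h0 ht)
  choose x hxU hxb using hx
  refine ⟨(Set.range x)ᶜ, ?_, Or.inr ?_, fun i h => h (hxU i) ⟨i, rfl⟩⟩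
  · rintro ⟨i, hi⟩
    have := hxb i
    rw [hi] at this
    have : 0 < (i+1)^2 := by positivity
    omega
  · have hb : ∀ m : ℕ, (m : ℝ) - Real.sqrt m ≤ (Nat.card ↥((Set.range x)ᶜ ∩ Set.Icc 1 m) : ℝ) := by
      intro m
      have h1 : Set.Icc 1 m ⊆ ((Set.range x)ᶜ ∩ Set.Icc 1 m) ∪ ↑((Finset.range (Nat.sqrt m)).image x) := by
        intro y hy
        by_cases h : y ∈ Set.range x
        · right
          obtain ⟨i, rfl⟩ := h
          simp only [Finset.coe_image, Finset.coe_range]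
          refine ⟨i, ?_, rfl⟩
          have : i + 1 ≤ Nat.sqrt m := Nat.le_sqrt'.2 ((hxb i).trans hy.2)
          simpa using this
        · exact Or.inl ⟨h, hy⟩
      have h2 := Set.ncard_le_ncard h1 (((Set.finite_Icc 1 m).inter_of_right _).union (Finset.finite_toSet _))
      have h3 := h2.trans (Set.ncard_union_le _ _)
      rw [Set.ncard_coe_finset] at h3
      have h4 : ((Finset.range (Nat.sqrt m)).image x).card ≤ Nat.sqrt m := by
        simpa using Finset.card_image_le (s := Finset.range (Nat.sqrt m)) (f := x)
      have h5 : (Set.Icc 1 m).ncard = m := by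
        rw [← Finset.coe_Icc, Set.ncard_coe_finset]; simp
      rw [h5] at h3
      have h6 : m ≤ Nat.card ↥((Set.range x)ᶜ ∩ Set.Icc 1 m) + Nat.sqrt m := by
        rw [Nat.card_coe_set_eq]; omega
      have h7 : (m : ℝ) ≤ Nat.card ↥((Set.range x)ᶜ ∩ Set.Icc 1 m) + (Nat.sqrt m : ℝ) := by
        exact_mod_cast h6
      have h8 : (Nat.sqrt m : ℝ) ≤ Real.sqrt m := Real.nat_sqrt_le_real_sqrt
      linarith
    have hs : Tendsto (fun m : ℕ => 1 - (Real.sqrt m)⁻¹) atTop (𝓝 1) := by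
      have : Tendsto (fun m : ℕ => (Real.sqrt m)⁻¹) atTop (𝓝 0) :=
        tendsto_inv_atTop_zero.comp (Real.tendsto_sqrt_atTop.comp tendsto_natCast_atTop_atTop)
      simpa using this.const_sub 1
    refine tendsto_of_tendsto_of_tendsto_of_le_of_le' hs tendsto_const_nhds ?_ ?_
    · filter_upwards [eventually_gt_atTop 0] with m hm
      have hm' : (0 : ℝ) < m := by exact_mod_cast hm
      rw [le_div_iff₀ hm']
      refine le_trans (le_of_eq ?_) (hb m)
      have hsq := Real.sqrt_pos.2 hm'
      have := Real.mul_self_sqrt hm'.le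
      field_simp
      nlinarith
    · filter_upwards [eventually_gt_atTop 0] with m hm
      have hm' : (0 : ℝ) < m := by exact_mod_cast hm
      rw [div_le_one hm']
      have : Nat.card ↥((Set.range x)ᶜ ∩ Set.Icc 1 m) ≤ m := by
        rw [Nat.card_coe_set_eq]
        refine (Set.ncard_le_ncard Set.inter_subset_right (Set.finite_Icc 1 m)).trans ?_
        rw [← Finset.coe_Icc, Set.ncard_coe_finset]; simp
      exact_mod_cast this

/-- No topological space definable in an o-minimal structure is homeomorphic to the Appert
space, i.e. to `ℕ` equipped with the topology whose open sets are exactly those `U` with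
`0 ∉ U` or `lim_{n→∞} |U ∩ {1, …, n}| / n = 1`. -/
theorem no_definable_top_space_homeomorphic_to_appert
    {L : FirstOrder.Language.{u, u}} {M : Type u} [L.Structure M] [LinearOrder M]
    (hM : IsOMinimal L M) {n : ℕ} (A : Set (Fin n → M)) (t : TopologicalSpace A)
    (h : IsDefinableTopSpace L A t)
    (τ : TopologicalSpace ℕ) (hτ : ∀ U : Set ℕ, τ.IsOpen U ↔ AppertIsOpen U) :
    IsEmpty (@Homeomorph A ℕ t τ) := by

  refine ⟨fun φ => ?_⟩
  obtain ⟨hA, k, ψ, S, -, hbasis⟩ := h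
  have hAc : A.Countable := by
    have : Countable A := φ.toEquiv.injective.countable
    exact Set.countable_coe_iff.1 this
  have hψ : DP L (fun w : Fin n ⊕ Fin k → M =>
      ψ.Realize (Sum.elim (w ∘ Sum.inl) (w ∘ Sum.inr))) := by
    refine DP.of (s := {w | ψ.Realize w}) ?_ fun w => ?_
    · exact (Set.empty_definable_iff.2 ⟨ψ, rfl⟩).mono (Set.empty_subset _)
    · rw [Sum.elim_comp_inl_inr]; rfl
  have hc := fam_countable hM (D := fun x => x ∈ A) hA hAc k
    (fun x b => ψ.Realize (Sum.elim x b)) hψ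
  have hBc : ((fun b => {x : A | ψ.Realize (Sum.elim (x : Fin n → M) b)}) '' S).Countable := by
    refine (hc.image (fun s => ((↑) : A → (Fin n → M)) ⁻¹' s)).mono ?_
    rintro _ ⟨b, -, rfl⟩
    refine ⟨_, ⟨b, rfl⟩, ?_⟩
    ext x
    exact ⟨fun h => h.2, fun h => ⟨x.2, h⟩⟩
  set B := ((fun b => {x : A | ψ.Realize (Sum.elim (x : Fin n → M) b)}) '' S) with hB
  set a := φ.symm 0 with ha
  have hBa : {U | U ∈ B ∧ a ∈ U}.Countable := hBc.mono fun U h => h.1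
  have hne : {U | U ∈ B ∧ a ∈ U}.Nonempty := by
    obtain ⟨U, hU, haU, -⟩ := hbasis.exists_subset_of_mem_open (Set.mem_univ a)
      (@isOpen_univ A t)
    exact ⟨U, hU, haU⟩
  obtain ⟨U, hU⟩ := hBa.exists_eq_range hne
  have hUm : ∀ i, U i ∈ B ∧ a ∈ U i := fun i => by
    have : U i ∈ {U | U ∈ B ∧ a ∈ U} := hU ▸ Set.mem_range_self i
    exact this
  obtain ⟨V, h0, hV, hn⟩ := appert_diag (fun i => φ.symm ⁻¹' (U i)) fun i => by
    refine ⟨(hUm i).2, (hτ _).1 ?_⟩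
    exact (hbasis.isOpen (hUm i).1).preimage φ.symm.continuous
  have hVo : IsOpen[τ] V := (hτ V).2 hV
  have hWo : IsOpen[t] (φ ⁻¹' V) := hVo.preimage φ.continuous
  obtain ⟨W, hW, haW, hWV⟩ := hbasis.exists_subset_of_mem_open
    (show a ∈ φ ⁻¹' V by simpa [ha] using h0) hWo
  have : W ∈ {U | U ∈ B ∧ a ∈ U} := ⟨hW, haW⟩
  rw [hU] at this
  obtain ⟨i, rfl⟩ := this
  refine hn i fun m hm => ?_
  have := hWV hm
  simpa using this
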